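/- arXiv:2602.21040 — 8 statements merged into one kernel-verified Lean document; each statement's English description precedes it below -/
import Mathlib

section
/- Let p and q be real numbers with 2 < p < q, and let δ > 0. Set C(δ) = ((q−p)/(q−2))·((p−2)/(δ(q−2)))^{(p−2)/(q−p)}. Then for every real number a > 0, one has a^p ≤ C(δ)·a^2 + δ·a^q, where powers with real exponents are real powers. -/
theorem rpow_interpolation_optimal_constant (p q δ : ℝ) (hp : 2 < p) (hpq : p < q)
    (hδ : 0 < δ) :
    ∀ a : ℝ, 0 < a →
      a ^ p ≤ ((q - p) / (q - 2)) * ((p - 2) / (δ * (q - 2))) ^ ((p - 2) / (q - p)) * a ^ (2 : ℝ)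
        + δ * a ^ q := by
  intro a ha
  have h1 : 0 < p - 2 := by linarith
  have h2 : 0 < q - p := by linarith
  have h3 : 0 < q - 2 := by linarith
  have hK : 0 < (p - 2) / (δ * (q - 2)) := by positivity
  have hδK : δ = (p - 2) / (q - 2) * ((p - 2) / (δ * (q - 2)))⁻¹ := by
    field_simp
  generalize (p - 2) / (δ * (q - 2)) = K at hK hδK
  have key := Real.geom_mean_le_arith_mean2_weighted (w₁ := (q - p) / (q - 2))
    (w₂ := (p - 2) / (q - 2)) (p₁ := K ^ ((p - 2) / (q - p)) * a ^ (2 : ℝ))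
    (p₂ := K⁻¹ * a ^ q) (by positivity) (by positivity) (by positivity) (by positivity)
    (by field_simp; ring)
  have e : (K ^ ((p - 2) / (q - p)) * a ^ (2 : ℝ)) ^ ((q - p) / (q - 2))
      * (K⁻¹ * a ^ q) ^ ((p - 2) / (q - 2)) = a ^ p := by
    obtain ⟨k, rfl⟩ : ∃ k, K = Real.exp k := ⟨_, (Real.exp_log hK).symm⟩
    obtain ⟨s, rfl⟩ : ∃ s, a = Real.exp s := ⟨_, (Real.exp_log ha).symm⟩
    simp only [← Real.exp_neg, ← Real.exp_mul, ← Real.exp_add]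
    congr 1
    field_simp
    ring
  rw [e] at key
  rw [hδK]
  linarith
end

section
/- Assume additionally λ₁ < 0, λ₂ < 0, α₁ < 4 < α₂, and let M ≥ 0 and C, δ > 0 be real numbers such that N₁ ≤ C·M + δ·N₃ and δ·|λ₁|·(α₂−α₁)/(α₁+2) ≤ |λ₃|·(α₃−α₂)/(α₃+2). Then Y ≥ ((α₂ − 4)/2)·G − (|λ₁|·C·(α₂−α₁)/(α₁+2))·M − α₂·E. -/
theorem virial_case2B
    (G N₁ N₂ N₃ : ℝ) (hG : 0 ≤ G) (hN₁ : 0 ≤ N₁) (hN₂ : 0 ≤ N₂) (hN₃ : 0 ≤ N₃)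
    (l₁ l₂ l₃ : ℝ) (hl₃ : l₃ < 0)
    (α₁ α₂ α₃ : ℝ) (hα₁ : 0 < α₁) (h₁₂ : α₁ < α₂) (h₂₃ : α₂ < α₃)
    (E Y : ℝ)
    (hE : E = G / 2 + l₁ * N₁ / (α₁ + 2) + l₂ * N₂ / (α₂ + 2) + l₃ * N₃ / (α₃ + 2))
    (hY : Y = -2 * G - l₁ * α₁ * N₁ / (α₁ + 2) - l₂ * α₂ * N₂ / (α₂ + 2) - l₃ * α₃ * N₃ / (α₃ + 2))
    (hl₁ : l₁ < 0) (hl₂ : l₂ < 0) (hα₁4 : α₁ < 4) (h4α₂ : 4 < α₂)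
    (M C δ : ℝ) (hM : 0 ≤ M) (hC : 0 < C) (hδ : 0 < δ)
    (hinterp : N₁ ≤ C * M + δ * N₃)
    (hδsmall : δ * |l₁| * (α₂ - α₁) / (α₁ + 2) ≤ |l₃| * (α₃ - α₂) / (α₃ + 2)) :
    Y ≥ ((α₂ - 4) / 2) * G - (|l₁| * C * (α₂ - α₁) / (α₁ + 2)) * M - α₂ * E := by
  rw [abs_of_neg hl₁, abs_of_neg hl₃] at hδsmall
  rw [abs_of_neg hl₁]
  have hK : 0 ≤ -l₁ * (α₂ - α₁) / (α₁ + 2) :=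
    div_nonneg (mul_nonneg (by linarith) (by linarith)) (by linarith)
  have h1 := mul_le_mul_of_nonneg_left hinterp hK
  have h2 := mul_le_mul_of_nonneg_right hδsmall hN₃
  subst hE hY
  simp only [div_eq_mul_inv] at *
  generalize (α₁ + 2)⁻¹ = a at *
  generalize (α₂ + 2)⁻¹ = b at *
  generalize (α₃ + 2)⁻¹ = c at *
  linarith
end

section
/- Assume additionally λ₁ < 0, λ₂ < 0, α₂ < 4 < α₃, and let θ be a real number with 4/α₃ < θ < 1. Let M ≥ 0 and C₁, C₂, δ₁, δ₂ > 0 be real numbers such that N₁ ≤ C₁·M + δ₁·N₃, N₂ ≤ C₂·M + δ₂·N₃, δ₁·|λ₁|·(α₃θ−α₁)/(α₁+2) ≤ |λ₃|·α₃·(1−θ)/(2(α₃+2)), and δ₂·|λ₂|·(α₃θ−α₂)/(α₂+2) ≤ |λ₃|·α₃·(1−θ)/(2(α₃+2)). Then Y ≥ ((α₃θ − 4)/2)·G − (|λ₁|·C₁·(α₃θ−α₁)/(α₁+2) + |λ₂|·C₂·(α₃θ−α₂)/(α₂+2))·M − α₃θ·E. -/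
theorem virial_case2C
    (G N₁ N₂ N₃ : ℝ) (hG : 0 ≤ G) (hN₁ : 0 ≤ N₁) (hN₂ : 0 ≤ N₂) (hN₃ : 0 ≤ N₃)
    (l₁ l₂ l₃ : ℝ) (hl₃ : l₃ < 0)
    (α₁ α₂ α₃ : ℝ) (hα₁ : 0 < α₁) (h₁₂ : α₁ < α₂) (h₂₃ : α₂ < α₃)
    (E Y : ℝ)
    (hE : E = G / 2 + l₁ * N₁ / (α₁ + 2) + l₂ * N₂ / (α₂ + 2) + l₃ * N₃ / (α₃ + 2))
    (hY : Y = -2 * G - l₁ * α₁ * N₁ / (α₁ + 2) - l₂ * α₂ * N₂ / (α₂ + 2) - l₃ * α₃ * N₃ / (α₃ + 2))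
    (hl₁ : l₁ < 0) (hl₂ : l₂ < 0) (hα₂4 : α₂ < 4) (h4α₃ : 4 < α₃)
    (θ : ℝ) (hθ₁ : 4 / α₃ < θ) (hθ₂ : θ < 1)
    (M C₁ C₂ δ₁ δ₂ : ℝ) (hM : 0 ≤ M) (hC₁ : 0 < C₁) (hC₂ : 0 < C₂) (hδ₁ : 0 < δ₁) (hδ₂ : 0 < δ₂)
    (hinterp₁ : N₁ ≤ C₁ * M + δ₁ * N₃)
    (hinterp₂ : N₂ ≤ C₂ * M + δ₂ * N₃)
    (hδ₁small : δ₁ * |l₁| * (α₃ * θ - α₁) / (α₁ + 2) ≤ |l₃| * α₃ * (1 - θ) / (2 * (α₃ + 2)))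
    (hδ₂small : δ₂ * |l₂| * (α₃ * θ - α₂) / (α₂ + 2) ≤ |l₃| * α₃ * (1 - θ) / (2 * (α₃ + 2))) :
    Y ≥ ((α₃ * θ - 4) / 2) * G
      - (|l₁| * C₁ * (α₃ * θ - α₁) / (α₁ + 2) + |l₂| * C₂ * (α₃ * θ - α₂) / (α₂ + 2)) * M
      - α₃ * θ * E := by
  rw [abs_of_neg hl₁] at *
  rw [abs_of_neg hl₂] at *
  rw [abs_of_neg hl₃] at *
  have h4 : 4 < α₃ * θ := by
    have := (div_lt_iff₀ (by linarith : (0 : ℝ) < α₃)).1 hθ₁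
    linarith
  have a1 : 0 ≤ -l₁ * (α₃ * θ - α₁) / (α₁ + 2) :=
    div_nonneg (mul_nonneg (by linarith) (by linarith)) (by linarith)
  have a2 : 0 ≤ -l₂ * (α₃ * θ - α₂) / (α₂ + 2) :=
    div_nonneg (mul_nonneg (by linarith) (by linarith)) (by linarith)
  have p1 := mul_le_mul_of_nonneg_left hinterp₁ a1
  have p2 := mul_le_mul_of_nonneg_left hinterp₂ a2
  have q1 := mul_le_mul_of_nonneg_right hδ₁small hN₃
  have q2 := mul_le_mul_of_nonneg_right hδ₂small hN₃
  have e3 : -l₃ * α₃ * (1 - θ) / (2 * (α₃ + 2)) = -l₃ * α₃ * (1 - θ) / (α₃ + 2) / 2 := by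
    rw [mul_comm, div_div]
    ring
  rw [e3] at q1 q2
  subst hE hY
  linear_combination p1 + p2 + q1 + q2
end

section
/- Assume additionally λ₁ > 0, λ₂ < 0, α₂ < 4 < α₃, and let θ be a real number with 4/α₃ < θ < 1. Let M ≥ 0 and C, δ > 0 be real numbers such that N₂ ≤ C·M + δ·N₃ and δ·|λ₂|·(α₃θ−α₂)/(α₂+2) ≤ |λ₃|·α₃·(1−θ)/(α₃+2). Then Y ≥ ((α₃θ − 4)/2)·G − (|λ₂|·C·(α₃θ−α₂)/(α₂+2))·M − α₃θ·E. -/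
theorem virial_case3C
    (G N₁ N₂ N₃ : ℝ) (hG : 0 ≤ G) (hN₁ : 0 ≤ N₁) (hN₂ : 0 ≤ N₂) (hN₃ : 0 ≤ N₃)
    (l₁ l₂ l₃ : ℝ) (hl₃ : l₃ < 0)
    (α₁ α₂ α₃ : ℝ) (hα₁ : 0 < α₁) (h₁₂ : α₁ < α₂) (h₂₃ : α₂ < α₃)
    (E Y : ℝ)
    (hE : E = G / 2 + l₁ * N₁ / (α₁ + 2) + l₂ * N₂ / (α₂ + 2) + l₃ * N₃ / (α₃ + 2))
    (hY : Y = -2 * G - l₁ * α₁ * N₁ / (α₁ + 2) - l₂ * α₂ * N₂ / (α₂ + 2) - l₃ * α₃ * N₃ / (α₃ + 2))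
    (hl₁ : 0 < l₁) (hl₂ : l₂ < 0) (hα₂4 : α₂ < 4) (h4α₃ : 4 < α₃)
    (θ : ℝ) (hθ₁ : 4 / α₃ < θ) (hθ₂ : θ < 1)
    (M C δ : ℝ) (hM : 0 ≤ M) (hC : 0 < C) (hδ : 0 < δ)
    (hinterp : N₂ ≤ C * M + δ * N₃)
    (hδsmall : δ * |l₂| * (α₃ * θ - α₂) / (α₂ + 2) ≤ |l₃| * α₃ * (1 - θ) / (α₃ + 2)) :
    Y ≥ ((α₃ * θ - 4) / 2) * G - (|l₂| * C * (α₃ * θ - α₂) / (α₂ + 2)) * M - α₃ * θ * E := by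
  have h4 : 4 < α₃ * θ := by
    have h := (div_lt_iff₀ (by linarith : (0 : ℝ) < α₃)).1 hθ₁
    linarith
  rw [abs_of_neg hl₂] at hδsmall ⊢
  rw [abs_of_neg hl₃] at hδsmall
  have hA : 0 ≤ l₁ * N₁ * (α₃ * θ - α₁) / (α₁ + 2) :=
    div_nonneg (mul_nonneg (mul_nonneg hl₁.le hN₁) (by linarith)) (by linarith)
  have hK : 0 ≤ -l₂ * (α₃ * θ - α₂) / (α₂ + 2) :=
    div_nonneg (mul_nonneg (by linarith) (by linarith)) (by linarith)
  have h2 := mul_le_mul_of_nonneg_left hinterp hK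
  have h3 := mul_le_mul_of_nonneg_right hδsmall hN₃
  subst hE hY
  simp only [div_eq_mul_inv] at *
  nlinarith [hA, h2, h3]
end

section
/- Assume additionally λ₁ < 0, λ₂ > 0, α₁ > 4, and let M ≥ 0 and C, δ > 0 be real numbers such that N₂ ≤ C·M + δ·N₃ and δ·λ₂·(α₂−α₁)/(α₂+2) ≤ |λ₃|·(α₃−α₁)/(2(α₃+2)). Then Y ≥ ((α₁ − 4)/2)·G − (λ₂·C·(α₂−α₁)/(α₂+2))·M − α₁·E. -/
theorem virial_case4A
    (G N₁ N₂ N₃ : ℝ) (hG : 0 ≤ G) (hN₁ : 0 ≤ N₁) (hN₂ : 0 ≤ N₂) (hN₃ : 0 ≤ N₃)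
    (l₁ l₂ l₃ : ℝ) (hl₃ : l₃ < 0)
    (α₁ α₂ α₃ : ℝ) (hα₁ : 0 < α₁) (h₁₂ : α₁ < α₂) (h₂₃ : α₂ < α₃)
    (E Y : ℝ)
    (hE : E = G / 2 + l₁ * N₁ / (α₁ + 2) + l₂ * N₂ / (α₂ + 2) + l₃ * N₃ / (α₃ + 2))
    (hY : Y = -2 * G - l₁ * α₁ * N₁ / (α₁ + 2) - l₂ * α₂ * N₂ / (α₂ + 2) - l₃ * α₃ * N₃ / (α₃ + 2))
    (hl₁ : l₁ < 0) (hl₂ : 0 < l₂) (hα₁4 : 4 < α₁)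
    (M C δ : ℝ) (hM : 0 ≤ M) (hC : 0 < C) (hδ : 0 < δ)
    (hinterp : N₂ ≤ C * M + δ * N₃)
    (hδsmall : δ * l₂ * (α₂ - α₁) / (α₂ + 2) ≤ |l₃| * (α₃ - α₁) / (2 * (α₃ + 2))) :
    Y ≥ ((α₁ - 4) / 2) * G - (l₂ * C * (α₂ - α₁) / (α₂ + 2)) * M - α₁ * E := by
  have hA : 0 ≤ l₂ * (α₂ - α₁) / (α₂ + 2) :=
    div_nonneg (mul_nonneg hl₂.le (by linarith)) (by linarith)
  have hB : 0 ≤ -l₃ * (α₃ - α₁) / (α₃ + 2) :=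
    div_nonneg (mul_nonneg (by linarith) (by linarith)) (by linarith)
  have h1 := mul_le_mul_of_nonneg_left hinterp hA
  have h2 := mul_le_mul_of_nonneg_right hδsmall hN₃
  rw [abs_of_neg hl₃, mul_comm (2 : ℝ), ← div_div] at h2
  have h3 := mul_nonneg hB hN₃
  have key : Y - (((α₁ - 4) / 2) * G - (l₂ * C * (α₂ - α₁) / (α₂ + 2)) * M - α₁ * E)
      = l₂ * (α₂ - α₁) / (α₂ + 2) * (C * M) - l₂ * (α₂ - α₁) / (α₂ + 2) * N₂
        + -l₃ * (α₃ - α₁) / (α₃ + 2) * N₃ := by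
    rw [hY, hE]
    ring
  have h4 : δ * l₂ * (α₂ - α₁) / (α₂ + 2) * N₃
      = l₂ * (α₂ - α₁) / (α₂ + 2) * (δ * N₃) := by ring
  have h5 : -l₃ * (α₃ - α₁) / (α₃ + 2) / 2 * N₃
      = (-l₃ * (α₃ - α₁) / (α₃ + 2) * N₃) / 2 := by ring
  rw [h4, h5] at h2
  rw [mul_add] at h1
  linarith
end

section
/- Assume additionally λ₁ < 0, λ₂ > 0, α₁ < 4 < α₂, and let θ be a real number with 0 < θ < 1 and (α₂−4)/(α₃−α₂) < θ; set β = (α₃−α₂)θ + α₂. Let M ≥ 0 and C, δ > 0 be real numbers such that N₁ ≤ C·M + δ·N₃ and δ·|λ₁|·(β−α₁)/(α₁+2) ≤ |λ₃|·(α₃−α₂)·(1−θ)/(α₃+2). Then Y ≥ ((β − 4)/2)·G − (|λ₁|·C·(β−α₁)/(α₁+2))·M − β·E. -/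
theorem virial_case4B
    (G N₁ N₂ N₃ : ℝ) (hG : 0 ≤ G) (hN₁ : 0 ≤ N₁) (hN₂ : 0 ≤ N₂) (hN₃ : 0 ≤ N₃)
    (l₁ l₂ l₃ : ℝ) (hl₃ : l₃ < 0)
    (α₁ α₂ α₃ : ℝ) (hα₁ : 0 < α₁) (h₁₂ : α₁ < α₂) (h₂₃ : α₂ < α₃)
    (E Y : ℝ)
    (hE : E = G / 2 + l₁ * N₁ / (α₁ + 2) + l₂ * N₂ / (α₂ + 2) + l₃ * N₃ / (α₃ + 2))
    (hY : Y = -2 * G - l₁ * α₁ * N₁ / (α₁ + 2) - l₂ * α₂ * N₂ / (α₂ + 2) - l₃ * α₃ * N₃ / (α₃ + 2))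
    (hl₁ : l₁ < 0) (hl₂ : 0 < l₂) (hα₁4 : α₁ < 4) (h4α₂ : 4 < α₂)
    (θ β : ℝ) (hθ₀ : 0 < θ) (hθ₂ : θ < 1) (hθ₁ : (α₂ - 4) / (α₃ - α₂) < θ)
    (hβ : β = (α₃ - α₂) * θ + α₂)
    (M C δ : ℝ) (hM : 0 ≤ M) (hC : 0 < C) (hδ : 0 < δ)
    (hinterp : N₁ ≤ C * M + δ * N₃)
    (hδsmall : δ * |l₁| * (β - α₁) / (α₁ + 2) ≤ |l₃| * (α₃ - α₂) * (1 - θ) / (α₃ + 2)) :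
    Y ≥ ((β - 4) / 2) * G - (|l₁| * C * (β - α₁) / (α₁ + 2)) * M - β * E := by
  have hb2 : 0 < β - α₂ := by
    have := mul_pos (sub_pos.2 h₂₃) hθ₀
    linarith
  have hb1 : 0 < β - α₁ := by linarith
  rw [abs_of_neg hl₁, abs_of_neg hl₃] at hδsmall
  rw [abs_of_neg hl₁]
  have hk : 0 ≤ (-l₁) * (β - α₁) / (α₁ + 2) :=
    div_nonneg (mul_nonneg (by linarith) hb1.le) (by linarith)
  have h1 := mul_le_mul_of_nonneg_left hinterp hk
  have h2 : 0 ≤ l₂ * (β - α₂) * N₂ / (α₂ + 2) :=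
    div_nonneg (mul_nonneg (mul_nonneg hl₂.le hb2.le) hN₂) (by linarith)
  have h3 := mul_le_mul_of_nonneg_right hδsmall hN₃
  have e : Y + β * E - ((β - 4) / 2 * G - (-l₁ * C * (β - α₁) / (α₁ + 2)) * M)
      = ((-l₁) * (β - α₁) / (α₁ + 2) * (C * M + δ * N₃) - (-l₁) * (β - α₁) / (α₁ + 2) * N₁)
        + l₂ * (β - α₂) * N₂ / (α₂ + 2)
        + (-l₃ * (α₃ - α₂) * (1 - θ) / (α₃ + 2) * N₃
          - δ * -l₁ * (β - α₁) / (α₁ + 2) * N₃) := by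
    rw [hE, hY, hβ]
    ring
  linarith
end

section
/- Assume additionally λ₁ < 0, λ₂ > 0, α₂ < 4 < α₃, and let θ be a real number with 4/α₃ < θ < 1. Let M ≥ 0 and C, δ > 0 be real numbers such that N₁ ≤ C·M + δ·N₃ and δ·|λ₁|·(α₃θ−α₁)/(α₁+2) ≤ |λ₃|·α₃·(1−θ)/(2(α₃+2)). Then Y ≥ ((α₃θ − 4)/2)·G − (|λ₁|·C·(α₃θ−α₁)/(α₁+2))·M − α₃θ·E. -/
theorem virial_case4C
    (G N₁ N₂ N₃ : ℝ) (hG : 0 ≤ G) (hN₁ : 0 ≤ N₁) (hN₂ : 0 ≤ N₂) (hN₃ : 0 ≤ N₃)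
    (l₁ l₂ l₃ : ℝ) (hl₃ : l₃ < 0)
    (α₁ α₂ α₃ : ℝ) (hα₁ : 0 < α₁) (h₁₂ : α₁ < α₂) (h₂₃ : α₂ < α₃)
    (E Y : ℝ)
    (hE : E = G / 2 + l₁ * N₁ / (α₁ + 2) + l₂ * N₂ / (α₂ + 2) + l₃ * N₃ / (α₃ + 2))
    (hY : Y = -2 * G - l₁ * α₁ * N₁ / (α₁ + 2) - l₂ * α₂ * N₂ / (α₂ + 2) - l₃ * α₃ * N₃ / (α₃ + 2))
    (hl₁ : l₁ < 0) (hl₂ : 0 < l₂) (hα₂4 : α₂ < 4) (h4α₃ : 4 < α₃)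
    (θ : ℝ) (hθ₁ : 4 / α₃ < θ) (hθ₂ : θ < 1)
    (M C δ : ℝ) (hM : 0 ≤ M) (hC : 0 < C) (hδ : 0 < δ)
    (hinterp : N₁ ≤ C * M + δ * N₃)
    (hδsmall : δ * |l₁| * (α₃ * θ - α₁) / (α₁ + 2) ≤ |l₃| * α₃ * (1 - θ) / (2 * (α₃ + 2))) :
    Y ≥ ((α₃ * θ - 4) / 2) * G - (|l₁| * C * (α₃ * θ - α₁) / (α₁ + 2)) * M - α₃ * θ * E := by
  have hα₃ : 0 < α₃ := by linarith
  have hθ4 : 4 < α₃ * θ := by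
    have := (div_lt_iff₀ hα₃).1 hθ₁
    linarith
  rw [abs_of_neg hl₁, abs_of_neg hl₃] at hδsmall
  rw [abs_of_neg hl₁]
  have hp : 0 < (α₁ + 2)⁻¹ := by positivity
  have hq : 0 < (α₂ + 2)⁻¹ := inv_pos.2 (by linarith)
  have hr : 0 < (α₃ + 2)⁻¹ := by positivity
  have k1 : 0 ≤ -l₁ * (α₃ * θ - α₁) * (α₁ + 2)⁻¹ :=
    mul_nonneg (mul_nonneg (by linarith) (by linarith)) hp.le
  have k2 : 0 ≤ l₂ * (α₃ * θ - α₂) * (α₂ + 2)⁻¹ * N₂ :=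
    mul_nonneg (mul_nonneg (mul_nonneg hl₂.le (by linarith)) hq.le) hN₂
  have k3 : 0 ≤ -l₃ * α₃ * (1 - θ) * (α₃ + 2)⁻¹ * N₃ :=
    mul_nonneg (mul_nonneg (mul_nonneg (mul_nonneg (by linarith) hα₃.le) (by linarith)) hr.le) hN₃
  have e1 := mul_le_mul_of_nonneg_left hinterp k1
  have e2 := mul_le_mul_of_nonneg_right hδsmall hN₃
  rw [hY, hE]
  simp only [div_eq_mul_inv, mul_inv] at *
  generalize (α₁ + 2)⁻¹ = p at *
  generalize (α₂ + 2)⁻¹ = q at *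
  generalize (α₃ + 2)⁻¹ = r at *
  linarith
end

section
/- For every Schwartz function u : ℝ → ℂ, one has (1/4)·(∫_ℝ |u(x)|² dx)² + (Im ∫_ℝ x·u'(x)·conj(u(x)) dx)² ≤ (∫_ℝ x²·|u(x)|² dx)·(∫_ℝ |u'(x)|² dx). -/
open MeasureTheory Complex

lemma aux_norm (f : SchwartzMap ℝ ℂ) : ‖f.toLp 2‖ ^ 2 = ∫ x : ℝ, ‖f x‖ ^ 2 := by
  have h := SchwartzMap.inner_toL2_toL2_eq f f
  rw [inner_self_eq_norm_sq_to_K] at h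
  simp only [inner_self_eq_norm_sq_to_K] at h
  have h2 : (((‖f.toLp 2‖ ^ 2 : ℝ)) : ℂ) = ((∫ x : ℝ, ‖f x‖ ^ 2 : ℝ) : ℂ) := by
    rw [← integral_complex_ofReal]
    push_cast
    exact h
  exact_mod_cast h2

set_option maxHeartbeats 1000000 in
theorem uncertainty_principle_variance (u : SchwartzMap ℝ ℂ) :
    (1 / 4) * (∫ x : ℝ, ‖u x‖ ^ 2) ^ 2
      + ((∫ x : ℝ, (x : ℂ) * deriv (⇑u) x * (starRingEnd ℂ) (u x)).im) ^ 2
    ≤ (∫ x : ℝ, x ^ 2 * ‖u x‖ ^ 2) * ∫ x : ℝ, ‖deriv (⇑u) x‖ ^ 2 := by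
  have hid : Function.HasTemperateGrowth (fun x : ℝ => x) := by fun_prop
  obtain ⟨g, hg⟩ : ∃ g : SchwartzMap ℝ ℂ, ∀ x, g x = (x : ℂ) * u x :=
    ⟨SchwartzMap.smulLeftCLM ℂ (fun x : ℝ => x) u, fun x => by
      rw [SchwartzMap.smulLeftCLM_apply_apply hid]; simp⟩
  obtain ⟨d, hd⟩ : ∃ d : SchwartzMap ℝ ℂ, ∀ x, d x = deriv u x :=
    ⟨SchwartzMap.derivCLM ℂ ℂ u, fun x => rfl⟩
  obtain ⟨k, hk⟩ : ∃ k : SchwartzMap ℝ ℂ, ∀ x, k x = (x : ℂ) * d x :=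
    ⟨SchwartzMap.smulLeftCLM ℂ (fun x : ℝ => x) d, fun x => by
      rw [SchwartzMap.smulLeftCLM_apply_apply hid]; simp⟩
  have hgd : ∀ x, deriv g x = u x + k x := by
    intro x
    have h1 : HasDerivAt (fun x : ℝ => (x : ℂ) * u x) (1 * u x + (x : ℂ) * deriv u x) x :=
      (HasDerivAt.ofReal_comp (hasDerivAt_id x)).mul (u.hasDerivAt x)
    have : (g : ℝ → ℂ) = fun x : ℝ => (x : ℂ) * u x := funext hg
    rw [this, h1.deriv, hk, hd, one_mul]
  have hin := SchwartzMap.inner_toL2_toL2_eq g d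
  set I : ℂ := ∫ x : ℝ, (x : ℂ) * deriv (⇑u) x * (starRingEnd ℂ) (u x) with hI
  have hI' : inner ℂ (g.toLp 2) (d.toLp 2) = I := by
    rw [hin, hI]
    congr 1; ext x
    simp [hg, hd]; ring
  have hint : Integrable (fun x : ℝ => inner ℂ (g x) (d x)) := by
    have := L2.integrable_inner (𝕜 := ℂ) (g.toLp 2) (d.toLp 2)
    refine this.congr ?_
    filter_upwards [g.coeFn_toLp 2, d.coeFn_toLp 2] with x h1 h2
    rw [h1, h2]
  have hintu : Integrable (fun x : ℝ => ‖u x‖ ^ 2) := (u.memLp 2).integrable_norm_pow (by norm_num)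
  have hintre : Integrable (fun x : ℝ => (inner ℂ (g x) (d x)).re) := hint.re
  have hIre : I.re = ∫ x : ℝ, (inner ℂ (g x) (d x)).re := by
    rw [← hI', hin]
    exact (integral_re hint).symm
  have hparts := SchwartzMap.integral_bilinear_deriv_right_eq_neg_left g u (innerSL ℝ)
  have hL : ∫ x : ℝ, innerSL ℝ (g x) (deriv u x) = I.re := by
    rw [hIre]
    congr 1; ext x
    rw [hd]; simp [Complex.inner]
  have hR : ∫ x : ℝ, innerSL ℝ (deriv g x) (u x) = (∫ x : ℝ, ‖u x‖ ^ 2) + I.re := by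
    rw [hIre, ← integral_add hintu hintre]
    congr 1; ext x
    have hn : ‖u x‖ ^ 2 = (u x).re * (u x).re + (u x).im * (u x).im := by
      rw [← Complex.normSq_eq_norm_sq, Complex.normSq_apply]
    rw [hgd, hk, hg]
    simp [Complex.inner]; ring_nf
  rw [hL, hR] at hparts
  have hV : ∫ x : ℝ, x ^ 2 * ‖u x‖ ^ 2 = ‖g.toLp 2‖ ^ 2 := by
    rw [aux_norm]; congr 1; ext x; rw [hg]; simp [mul_pow]
  have hD : ∫ x : ℝ, ‖deriv (⇑u) x‖ ^ 2 = ‖d.toLp 2‖ ^ 2 := by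
    rw [aux_norm]; congr 1; ext x; rw [hd]
  have hCS : ‖I‖ ≤ ‖g.toLp 2‖ * ‖d.toLp 2‖ := hI' ▸ norm_inner_le_norm (𝕜 := ℂ) (g.toLp 2) (d.toLp 2)
  have hsq : ‖I‖ ^ 2 = I.re * I.re + I.im * I.im := by
    rw [← Complex.normSq_eq_norm_sq, Complex.normSq_apply]
  have hCS2 := pow_le_pow_left₀ (norm_nonneg I) hCS 2
  rw [hV, hD, ← mul_pow]
  have hM : (∫ x : ℝ, ‖u x‖ ^ 2) = -2 * I.re := by linarith
  rw [hM]
  rw [hsq] at hCS2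
  linarith [sq (I.re), sq (I.im), show (1 / 4 : ℝ) * (-2 * I.re) ^ 2 = I.re * I.re by ring]
end
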